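/- arXiv:1601.02915 — 2 statements merged into one kernel-verified Lean document; each statement's English description precedes it below -/
import Mathlib

section
/- Let P : L → ℝ be a probability assignment. Then there exists a unique probability measure μ^P on 2^ℕ with the product σ-algebra such that μ^P{v : v ∩ A = U} = P(φ_A^U) for every finite nonempty A ⊆ ℕ and every U ⊆ A. -/
open MeasureTheory

/-- Propositional formulas over atoms `B_j`, `j : ℕ`, with `¬` and `→`. -/
inductive PropForm : Type
  | atom : ℕ → PropForm
  | neg : PropForm → PropForm
  | imp : PropForm → PropForm → PropForm
  deriving DecidableEq

namespace PropForm

def conj (α β : PropForm) : PropForm := neg (imp α (neg β))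
def disj (α β : PropForm) : PropForm := imp (neg α) β
def biimp (α β : PropForm) : PropForm := conj (imp α β) (imp β α)
def top : PropForm := imp (atom 0) (atom 0)
def bot : PropForm := neg top

/-- Satisfaction of a formula by a valuation `v : ℕ → Bool` (a subset of ℕ). -/
def sat (v : ℕ → Bool) : PropForm → Prop
  | atom j => v j = true
  | neg α => ¬ sat v α
  | imp α β => sat v α → sat v β

/-- The finite set `B_α` of indices of atoms occurring in `α`. -/
def atoms : PropForm → Finset ℕ
  | atom j => {j}
  | neg α => atoms α
  | imp α β => atoms α ∪ atoms β

end PropForm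

/-- `⊨ α`: every valuation satisfies `α`. -/
def Valid (α : PropForm) : Prop := ∀ v, PropForm.sat v α

/-- `α ⊨ β`. -/
def Entails (α β : PropForm) : Prop := ∀ v, PropForm.sat v α → PropForm.sat v β

/-- `Δ ⊨ α`. -/
def SetEntails (Δ : Set PropForm) (α : PropForm) : Prop :=
  ∀ v, (∀ δ ∈ Δ, PropForm.sat v δ) → PropForm.sat v α

/-- Conjunction of a list of formulas (empty conjunction is `⊤`). -/
def bigConj (l : List PropForm) : PropForm := l.foldr PropForm.conj PropForm.top

/-- Disjunction of a list of formulas (empty disjunction is `⊥`). -/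
def bigDisj (l : List PropForm) : PropForm := l.foldr PropForm.disj PropForm.bot

/-- `φ_A^U = (⋀_{j∈U} B_j) ∧ (⋀_{j∈A∖U} ¬B_j)`. -/
def phi (A U : Finset ℕ) : PropForm :=
  PropForm.conj (bigConj ((U.sort (· ≤ ·)).map PropForm.atom))
    (bigConj (((A \ U).sort (· ≤ ·)).map (fun j => PropForm.neg (PropForm.atom j))))

/-- The space of valuations, `2^ℕ` identified with `{0,1}^ℕ`, with the product σ-algebra. -/
abbrev Val := ℕ → Bool

/-- `v ∩ A` for a valuation `v` and a finite `A ⊆ ℕ`. -/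
def restrict (v : Val) (A : Finset ℕ) : Finset ℕ := A.filter (fun j => v j = true)

/-- `Prob_μ(α) = μ{v : v ⊨ α}`. -/
noncomputable def Prob (μ : Measure Val) (α : PropForm) : ℝ :=
  (μ {v | PropForm.sat v α}).toReal

/-- Adams' probability assignment: P1–P4. -/
structure IsProbAssignment (P : PropForm → ℝ) : Prop where
  nonneg : ∀ α, 0 ≤ P α
  le_one : ∀ α, P α ≤ 1
  valid_one : ∀ α, Valid α → P α = 1
  mono : ∀ α β, Entails α β → P α ≤ P β
  additive : ∀ α β, Valid (PropForm.neg (PropForm.conj β α)) →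
      P (PropForm.disj β α) = P β + P α

/-!
The sets of models of formulas form a ring of clopen subsets of the compact space `2^ℕ`, and `P`
descends to a finitely additive content on it. By compactness a countable cover of one member of
the ring by others has a finite subcover, so the content is σ-subadditive and Carathéodory's theorem
extends it to a measure. Uniqueness holds because the cylinders form a generating π-system.
-/

theorem isSigmaSubadditive_of_isCompact_of_isOpen {X : Type*} [TopologicalSpace X]
    {C : Set (Set X)} (hC : IsSetSemiring C) (hcompact : ∀ s ∈ C, IsCompact s)
    (hopen : ∀ s ∈ C, IsOpen s) (m : AddContent ENNReal C) : m.IsSigmaSubadditive := by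
  classical
  intro f hf hUnion
  obtain ⟨t, ht⟩ := (hcompact _ hUnion).elim_finite_subcover f (fun i => hopen _ (hf i)) subset_rfl
  calc m (⋃ i, f i) ≤ ∑ s ∈ t.image f, m s := by
        refine addContent_le_sum_of_subset_sUnion hC ?_ hUnion ?_
        · simpa [Set.subset_def] using fun i _ => hf i
        · simpa [Set.sUnion_image] using ht
    _ ≤ ∑ i ∈ t, m (f i) := Finset.sum_image_le_of_nonneg (fun _ _ => zero_le)
    _ ≤ ∑' i, m (f i) := ENNReal.sum_le_tsum t

theorem generateFrom_eq_pi_bool {ι : Type*} {C : Set (Set (ι → Bool))}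
    (hmeas : ∀ s ∈ C, MeasurableSet s) (hcoord : ∀ i, {v | v i = true} ∈ C) :
    MeasurableSpace.generateFrom C = MeasurableSpace.pi := by
  refine le_antisymm (MeasurableSpace.generateFrom_le hmeas) (iSup_le fun i => ?_)
  rw [← measurable_iff_comap_le]
  exact @measurable_to_bool _ (MeasurableSpace.generateFrom C) _
    (MeasurableSpace.measurableSet_generateFrom (hcoord i))

namespace PropForm

variable {v : Val} {α β : PropForm}

theorem sat_conj : sat v (conj α β) ↔ sat v α ∧ sat v β := by
  simp only [conj, sat]; tauto

theorem sat_disj : sat v (disj α β) ↔ sat v α ∨ sat v β := by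
  simp only [disj, sat]; tauto

theorem valid_top : Valid top := fun _ h => h

theorem sat_bigConj {l : List PropForm} : sat v (bigConj l) ↔ ∀ α ∈ l, sat v α := by
  induction l with
  | nil => simpa [bigConj] using valid_top v
  | cons α l ih =>
    change sat v (conj α (bigConj l)) ↔ _
    rw [sat_conj, ih, List.forall_mem_cons]

theorem sat_phi {A U : Finset ℕ} (hU : U ⊆ A) : sat v (phi A U) ↔ restrict v A = U := by
  have hsat : sat v (phi A U) ↔ (∀ j ∈ U, v j = true) ∧ ∀ j ∈ A \ U, ¬ v j = true := by
    simp only [phi, sat_conj, sat_bigConj, List.forall_mem_map, Finset.mem_sort, sat]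
  rw [hsat, restrict, Finset.ext_iff]
  grind

/-- The set of valuations satisfying `α`. -/
def models (α : PropForm) : Set Val := {v | sat v α}

theorem models_top : models top = Set.univ := Set.eq_univ_of_forall valid_top

theorem models_neg : models (neg α) = (models α)ᶜ := rfl

theorem models_bot : models bot = ∅ := by
  rw [bot, models_neg, models_top, Set.compl_univ]

theorem models_conj : models (conj α β) = models α ∩ models β := Set.ext fun _ => sat_conj

theorem models_disj : models (disj α β) = models α ∪ models β := Set.ext fun _ => sat_disj

theorem models_imp : models (imp α β) = (models α)ᶜ ∪ models β :=
  Set.ext fun _ => imp_iff_not_or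

theorem models_phi {A U : Finset ℕ} (hU : U ⊆ A) :
    models (phi A U) = {v | restrict v A = U} :=
  Set.ext fun _ => sat_phi hU

theorem valid_neg_conj_iff_disjoint :
    Valid (neg (conj α β)) ↔ Disjoint (models α) (models β) := by
  rw [Set.disjoint_left]
  exact forall_congr' fun v => (not_congr sat_conj).trans not_and

theorem isClopen_models (α : PropForm) : IsClopen (models α) := by
  induction α with
  | atom j => exact (isClopen_discrete {true}).preimage (continuous_apply j)
  | neg α ih => exact ih.compl
  | imp α β ihα ihβ => exact models_imp ▸ ihα.compl.union ihβ

theorem measurableSet_models (α : PropForm) : MeasurableSet (models α) :=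
  (isClopen_models α).isOpen.measurableSet

theorem isSetRing_range_models : IsSetRing (Set.range models) where
  empty_mem := ⟨bot, models_bot⟩
  union_mem := by
    rintro _ _ ⟨α, rfl⟩ ⟨β, rfl⟩
    exact ⟨disj α β, models_disj⟩
  sdiff_mem := by
    rintro _ _ ⟨α, rfl⟩ ⟨β, rfl⟩
    exact ⟨conj α (neg β), by rw [models_conj, models_neg, Set.sdiff_eq]⟩

theorem generateFrom_range_models :
    MeasurableSpace.generateFrom (Set.range models) = MeasurableSpace.pi :=
  generateFrom_eq_pi_bool (Set.forall_mem_range.2 measurableSet_models)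
    fun j => ⟨atom j, rfl⟩

theorem isSigmaSubadditive_addContent (m : AddContent ENNReal (Set.range models)) :
    m.IsSigmaSubadditive :=
  isSigmaSubadditive_of_isCompact_of_isOpen isSetRing_range_models.isSetSemiring
    (Set.forall_mem_range.2 fun α => (isClopen_models α).isClosed.isCompact)
    (Set.forall_mem_range.2 fun α => (isClopen_models α).isOpen) m

end PropForm

namespace IsProbAssignment

open PropForm

variable {P : PropForm → ℝ}

theorem factorsThrough_models (hP : IsProbAssignment P) : P.FactorsThrough models :=
  fun α β h => le_antisymm (hP.mono α β h.subset) (hP.mono β α h.superset)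

theorem apply_disj (hP : IsProbAssignment P) {α β : PropForm}
    (h : Disjoint (models α) (models β)) : P (disj α β) = P α + P β :=
  hP.additive β α (valid_neg_conj_iff_disjoint.2 h)

theorem apply_bot (hP : IsProbAssignment P) : P bot = 0 := by
  have hadd : P (disj bot bot) = P bot + P bot := hP.apply_disj (by simp [models_bot])
  have hidem : P (disj bot bot) = P bot :=
    hP.factorsThrough_models (by rw [models_disj, Set.union_self])
  linarith

/-- The set function sending `models α` to `P α`; sets not of this form get the junk
value `0`. -/
noncomputable def setFun (P : PropForm → ℝ) : Set Val → ENNReal :=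
  Function.extend models (fun α => ENNReal.ofReal (P α)) 0

theorem setFun_models (hP : IsProbAssignment P) (α : PropForm) :
    setFun P (models α) = ENNReal.ofReal (P α) :=
  (hP.factorsThrough_models.comp_left ENNReal.ofReal).extend_apply _ α

theorem setFun_empty (hP : IsProbAssignment P) : setFun P ∅ = 0 := by
  rw [← models_bot, hP.setFun_models, hP.apply_bot, ENNReal.ofReal_zero]

theorem setFun_union (hP : IsProbAssignment P) {s t : Set Val} (hs : s ∈ Set.range models)
    (ht : t ∈ Set.range models) (hst : Disjoint s t) :
    setFun P (s ∪ t) = setFun P s + setFun P t := by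
  obtain ⟨α, rfl⟩ := hs
  obtain ⟨β, rfl⟩ := ht
  rw [← models_disj, hP.setFun_models, hP.setFun_models, hP.setFun_models, hP.apply_disj hst,
    ENNReal.ofReal_add (hP.nonneg α) (hP.nonneg β)]

/-- The finitely additive content induced by `P` on the ring of sets of models. -/
noncomputable def content (hP : IsProbAssignment P) : AddContent ENNReal (Set.range models) :=
  isSetRing_range_models.addContent_of_union (setFun P) hP.setFun_empty hP.setFun_union

/-- The measure `μ^P`: the Carathéodory extension of the content induced by `P`. -/
noncomputable def measure (hP : IsProbAssignment P) : Measure Val :=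
  hP.content.measure isSetRing_range_models.isSetSemiring generateFrom_range_models.ge
    (isSigmaSubadditive_addContent _)

theorem measure_models (hP : IsProbAssignment P) (α : PropForm) :
    hP.measure (models α) = ENNReal.ofReal (P α) :=
  (hP.content.measure_eq isSetRing_range_models.isSetSemiring generateFrom_range_models.symm
    (isSigmaSubadditive_addContent _) ⟨α, rfl⟩).trans (hP.setFun_models α)

theorem prob_measure (hP : IsProbAssignment P) (α : PropForm) : Prob hP.measure α = P α :=
  (congrArg ENNReal.toReal (hP.measure_models α)).trans (ENNReal.toReal_ofReal (hP.nonneg α))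

theorem isProbabilityMeasure_measure (hP : IsProbAssignment P) :
    IsProbabilityMeasure hP.measure where
  measure_univ := by
    rw [← models_top, hP.measure_models, hP.valid_one top valid_top, ENNReal.ofReal_one]

end IsProbAssignment

namespace Val

/-- The cylinders `{v | v ∩ A = U}` with finite nonempty base `A` and `U ⊆ A`. -/
def cylinders : Set (Set Val) :=
  {s | ∃ A : Finset ℕ, A.Nonempty ∧ ∃ U ⊆ A, {v | restrict v A = U} = s}

theorem restrict_eq_restrict_iff {v w : Val} {A : Finset ℕ} :
    restrict w A = restrict v A ↔ ∀ j ∈ A, w j = v j := by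
  simp only [restrict, Finset.filter_inj', ← Bool.eq_iff_iff]

theorem isPiSystem_cylinders : IsPiSystem cylinders := by
  rintro _ ⟨A, hA, _, -, rfl⟩ _ ⟨B, -, _, -, rfl⟩ ⟨v, rfl, rfl⟩
  refine ⟨A ∪ B, hA.mono Finset.subset_union_left, restrict v (A ∪ B),
    Finset.filter_subset _ _, ?_⟩
  ext w
  simp only [Set.mem_ofPred_eq, Set.mem_inter_iff, restrict_eq_restrict_iff,
    Finset.forall_mem_union]

theorem generateFrom_cylinders :
    MeasurableSpace.generateFrom cylinders = MeasurableSpace.pi := by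
  refine generateFrom_eq_pi_bool ?_ fun j => ?_
  · rintro _ ⟨A, -, U, hU, rfl⟩
    exact PropForm.models_phi hU ▸ PropForm.measurableSet_models _
  · refine ⟨{j}, Finset.singleton_nonempty j, {j}, subset_rfl, ?_⟩
    simp [restrict, Finset.filter_eq_self]

theorem measure_ext_of_cylinders {μ ν : Measure Val} [IsFiniteMeasure μ]
    (h : ∀ s ∈ cylinders, μ s = ν s) : μ = ν := by
  let cover : Set (Set Val) :=
    Set.image (fun U : Finset ℕ => {v | restrict v {0} = U}) (Set.Iic {0})
  have cover_subset : cover ⊆ cylinders := by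
    rintro _ ⟨U, hU, rfl⟩
    exact ⟨{0}, Finset.singleton_nonempty 0, U, hU, rfl⟩
  have cover_countable : cover.Countable := ((Set.finite_Iic _).image _).countable
  have sUnion_cover : ⋃₀ cover = Set.univ := Set.eq_univ_of_forall fun v =>
    ⟨_, ⟨restrict v {0}, Finset.filter_subset _ _, rfl⟩, rfl⟩
  exact Measure.ext_of_generateFrom_of_cover_subset generateFrom_cylinders.symm
    isPiSystem_cylinders cover_subset cover_countable sUnion_cover
    (fun s _ => measure_ne_top μ s) h

end Val

/-- every probability assignment `P` is induced by a unique probability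
measure on `2^ℕ`: `μ^P{v : v ∩ A = U} = P(φ_A^U)` for all finite nonempty `A` and `U ⊆ A`. -/
theorem probAssignment_induces_unique_measure (P : PropForm → ℝ) (hP : IsProbAssignment P) :
    ∃! μ : MeasureTheory.Measure Val, IsProbabilityMeasure μ ∧
      ∀ A : Finset ℕ, A.Nonempty → ∀ U ⊆ A,
        (μ {v | restrict v A = U}).toReal = P (phi A U) := by
  have isProb : IsProbabilityMeasure hP.measure := hP.isProbabilityMeasure_measure
  have measure_cylinder : ∀ A : Finset ℕ, A.Nonempty → ∀ U ⊆ A,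
      (hP.measure {v | restrict v A = U}).toReal = P (phi A U) := fun A _ U hU => by
    rw [← PropForm.models_phi hU]
    exact hP.prob_measure (phi A U)
  refine ⟨hP.measure, ⟨isProb, measure_cylinder⟩, ?_⟩
  rintro ν ⟨hν, ν_cylinder⟩
  refine Val.measure_ext_of_cylinders ?_
  rintro _ ⟨A, hA, U, hU, rfl⟩
  rw [← ENNReal.toReal_eq_toReal_iff' (measure_ne_top ν _) (measure_ne_top hP.measure _),
    ν_cylinder A hA U hU, measure_cylinder A hA U hU]
end

section
/- Conservativeness of PPL over classical propositional logic: let Δ ∪ {α} be a set of propositional formulas, and for β ∈ L let β* denote the PPL formula ⟦β⟧ = 1 and Δ* = {δ* : δ ∈ Δ}. Then Δ* ⊨ α* in PPL (every stochastic valuation μ and assignment ρ with μ,ρ ⊨ δ* for all δ ∈ Δ satisfies μ,ρ ⊨ α*) if and only if Δ ⊨ α classically (every valuation satisfying every formula of Δ satisfies α). -/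
open MeasureTheory

/-! ## PPL: probabilistic propositional logic -/

/-- RCOF variables: `x_k` for `k ∈ ℕ` and `x_α` for propositional formulas `α`. -/
inductive RVar : Type
  | num : ℕ → RVar
  | fm : PropForm → RVar
  deriving DecidableEq

/-- RCOF terms: built from 0, 1, variables, unary `-`, binary `+` and `×`. -/
inductive RTerm : Type
  | zero : RTerm
  | one : RTerm
  | var : RVar → RTerm
  | neg : RTerm → RTerm
  | add : RTerm → RTerm → RTerm
  | mul : RTerm → RTerm → RTerm
  deriving DecidableEq

/-- Value of a term in `ℝ` under an assignment. -/
def RTerm.eval (ρ : RVar → ℝ) : RTerm → ℝ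
  | zero => 0
  | one => 1
  | var x => ρ x
  | neg t => - t.eval ρ
  | add t s => t.eval ρ + s.eval ρ
  | mul t s => t.eval ρ * s.eval ρ

/-- PPL formulas: atoms `⟦α⟧ = t` and `⟦α⟧ < t`, closed under implication. -/
inductive PPLForm : Type
  | eq : PropForm → RTerm → PPLForm
  | lt : PropForm → RTerm → PPLForm
  | imp : PPLForm → PPLForm → PPLForm
  deriving DecidableEq

/-- `⊥` in PPL: `⟦⊤⟧ < 1`. -/
def pbot : PPLForm := PPLForm.lt PropForm.top RTerm.one

/-- `¬φ` in PPL: `φ → (⟦⊤⟧ < 1)`. -/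
def pneg (φ : PPLForm) : PPLForm := PPLForm.imp φ pbot

/-- `φ ∧ ψ` in PPL. -/
def pconj (φ ψ : PPLForm) : PPLForm := pneg (PPLForm.imp φ (pneg ψ))

/-- `φ ∨ ψ` in PPL. -/
def pdisj (φ ψ : PPLForm) : PPLForm := PPLForm.imp (pneg φ) ψ

/-- `φ ↔ ψ` in PPL. -/
def piff (φ ψ : PPLForm) : PPLForm := pconj (PPLForm.imp φ ψ) (PPLForm.imp ψ φ)

/-- Conjunction of a nonempty list of PPL formulas (empty list gives `⟦⊤⟧ = 1`). -/
def pBigConj : List PPLForm → PPLForm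
  | [] => PPLForm.eq PropForm.top RTerm.one
  | [φ] => φ
  | φ :: l => pconj φ (pBigConj l)

/-- Disjunction of a nonempty list of PPL formulas (empty list gives `⊥`). -/
def pBigDisj : List PPLForm → PPLForm
  | [] => pbot
  | [φ] => φ
  | φ :: l => pdisj φ (pBigDisj l)

/-- Satisfaction of a PPL formula by a stochastic valuation `μ` and an assignment `ρ`. -/
def PPLForm.sat (μ : MeasureTheory.Measure Val) (ρ : RVar → ℝ) : PPLForm → Prop
  | eq α t => Prob μ α = t.eval ρ
  | lt α t => Prob μ α < t.eval ρ
  | imp φ ψ => φ.sat μ ρ → ψ.sat μ ρ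

/-- `Γ ⊨ φ` in PPL. -/
def PPLentails (Γ : Set PPLForm) (φ : PPLForm) : Prop :=
  ∀ μ : MeasureTheory.Measure Val, MeasureTheory.IsProbabilityMeasure μ →
    ∀ ρ : RVar → ℝ, (∀ γ ∈ Γ, PPLForm.sat μ ρ γ) → PPLForm.sat μ ρ φ

/-- Boolean evaluation of a PPL formula given truth values for its atomic subformulas. -/
def PPLForm.evalAtoms (w : PPLForm → Bool) : PPLForm → Bool
  | imp φ ψ => !(φ.evalAtoms w) || ψ.evalAtoms w
  | φ => w φ

/-- Tautological PPL formulas: true under every assignment of truth values to atomic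
PPL formulas; these are exactly the PPL-substitution-instances of classical tautologies. -/
def PPLTaut (φ : PPLForm) : Prop := ∀ w : PPLForm → Bool, φ.evalAtoms w = true

/-- Literals of classical propositional logic. -/
def IsLiteral (α : PropForm) : Prop :=
  (∃ j, α = PropForm.atom j) ∨ (∃ j, α = PropForm.neg (PropForm.atom j))

/-- Conjunctions of literals. -/
inductive IsLitConj : PropForm → Prop
  | lit {α} : IsLiteral α → IsLitConj α
  | conj {α β} : IsLitConj α → IsLitConj β → IsLitConj (PropForm.conj α β)

/-- `B_Λ`, the union of the atom sets of the formulas `α j`. -/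
def BigB {k : ℕ} (α : Fin k → PropForm) : Finset ℕ :=
  Finset.univ.sup fun j => (α j).atoms

/-- `Λ = {c j ℓ}` is an adequate set of DNF-conjuncts for `{α j}`. -/
structure AdequateDNF {k : ℕ} (α : Fin k → PropForm) (m : Fin k → ℕ)
    (c : (j : Fin k) → Fin (m j) → PropForm) : Prop where
  atoms_eq : ∀ j ℓ, (c j ℓ).atoms = BigB α
  litconj : ∀ j ℓ, IsLitConj (c j ℓ)
  pairwise_incons : ∀ j, ∀ ℓ ℓ' : Fin (m j), ℓ ≠ ℓ' →
      Valid (PropForm.neg (PropForm.conj (c j ℓ) (c j ℓ')))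
  equiv : ∀ j, Valid (PropForm.biimp (α j) (bigDisj (List.ofFn (c j))))

/-- The RCOF formula `Q^{α_1,…,α_k}_Λ` holding in `ℝ` under the assignment `ρ`. -/
def Qcond {k : ℕ} (α : Fin k → PropForm) (m : Fin k → ℕ)
    (c : (j : Fin k) → Fin (m j) → PropForm) (ρ : RVar → ℝ) : Prop :=
  (∀ U ∈ (BigB α).powerset,
      0 ≤ ρ (RVar.fm (phi (BigB α) U)) ∧ ρ (RVar.fm (phi (BigB α) U)) ≤ 1) ∧
  (∑ U ∈ (BigB α).powerset, ρ (RVar.fm (phi (BigB α) U))) = 1 ∧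
  (∀ j, ρ (RVar.fm (α j)) = ∑ ℓ : Fin (m j), ρ (RVar.fm (c j ℓ)))

/-- `x ∘ y` where `∘` is `=` if `b` and `<` otherwise. -/
def rcmp (b : Bool) (x y : ℝ) : Prop := if b then x = y else x < y

/-- The PPL atom `⟦α⟧ ∘ t` where `∘` is `=` if `b` and `<` otherwise. -/
def patom (b : Bool) (α : PropForm) (t : RTerm) : PPLForm :=
  if b then PPLForm.eq α t else PPLForm.lt α t

/-- Side condition of the RR axioms: there is an adequate set of DNF-conjuncts for
`{α_1,…,α_{k+1}}` such that the universal closure of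
`(Q ∧ ⋀_{j≤k} x_{α_j} ∘_j t_j) → x_{α_{k+1}} ∘_{k+1} t_{k+1}` holds in `ℝ`. -/
def RRside {k : ℕ} (α : Fin (k + 1) → PropForm) (isEq : Fin (k + 1) → Bool)
    (t : Fin (k + 1) → RTerm) : Prop :=
  ∃ (m : Fin (k + 1) → ℕ) (c : (j : Fin (k + 1)) → Fin (m j) → PropForm),
    AdequateDNF α m c ∧
    ∀ ρ : RVar → ℝ, Qcond α m c ρ →
      (∀ j : Fin k, rcmp (isEq j.castSucc) (ρ (RVar.fm (α j.castSucc)))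
          ((t j.castSucc).eval ρ)) →
      rcmp (isEq (Fin.last k)) (ρ (RVar.fm (α (Fin.last k)))) ((t (Fin.last k)).eval ρ)

/-- The RR axiom `(⟦α_1⟧ ∘_1 t_1 ∧ … ∧ ⟦α_k⟧ ∘_k t_k) → ⟦α_{k+1}⟧ ∘_{k+1} t_{k+1}`
(for `k = 0` it is just the conclusion). -/
def rrFormula {k : ℕ} (α : Fin (k + 1) → PropForm) (isEq : Fin (k + 1) → Bool)
    (t : Fin (k + 1) → RTerm) : PPLForm :=
  match k with
  | 0 => patom (isEq (Fin.last 0)) (α (Fin.last 0)) (t (Fin.last 0))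
  | k + 1 => PPLForm.imp
      (pBigConj (List.ofFn fun j : Fin (k + 1) =>
        patom (isEq j.castSucc) (α j.castSucc) (t j.castSucc)))
      (patom (isEq (Fin.last (k + 1))) (α (Fin.last (k + 1))) (t (Fin.last (k + 1))))

/-- The PPL calculus: hypotheses, TAUT, RR and modus ponens. -/
inductive PPLderiv (Γ : Set PPLForm) : PPLForm → Prop
  | hyp {φ} : φ ∈ Γ → PPLderiv Γ φ
  | taut {φ} : PPLTaut φ → PPLderiv Γ φ
  | rr {k : ℕ} (α : Fin (k + 1) → PropForm) (isEq : Fin (k + 1) → Bool)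
      (t : Fin (k + 1) → RTerm) :
      RRside α isEq t → PPLderiv Γ (rrFormula α isEq t)
  | mp {φ ψ} : PPLderiv Γ (PPLForm.imp φ ψ) → PPLderiv Γ φ → PPLderiv Γ ψ

/-- The translation `β* = (⟦β⟧ = 1)` of classical formulas into PPL. -/
def star (β : PropForm) : PPLForm := PPLForm.eq β RTerm.one

/-!
A stochastic valuation `μ` makes `β*` true exactly when `β` holds `μ`-almost surely. Since `L` is
countable, `μ` satisfies `Δ*` exactly when, almost surely, all of `Δ` holds simultaneously; so
`Δ ⊨ α` implies `Δ* ⊨ α*`. Conversely, under the Dirac measure at a valuation `v`, a formula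
holds almost surely exactly when it holds at `v`.
-/

namespace PropForm

/-- Gödel number of a formula, which witnesses that there are only countably many formulas. The
first component of the outer pair records the head connective. -/
def code : PropForm → ℕ
  | atom j => Nat.pair 0 j
  | neg α => Nat.pair 1 α.code
  | imp α β => Nat.pair 2 (Nat.pair α.code β.code)

theorem code_injective : Function.Injective code := by
  intro α β h
  induction α generalizing β <;> cases β <;> grind [code, Nat.pair_eq_pair]

instance : Countable PropForm := code_injective.countable

theorem measurableSet_setOf_sat (β : PropForm) : MeasurableSet {v : Val | β.sat v} := by
  induction β with
  | atom j => exact measurableSet_eq_fun (measurable_pi_apply j) measurable_const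
  | neg β ih => exact ih.compl
  | imp β γ ihβ ihγ => exact ihβ.imp ihγ

end PropForm

section StochasticValuation

variable (μ : Measure Val) [IsProbabilityMeasure μ] (ρ : RVar → ℝ)

theorem prob_eq_one_iff_ae_sat (β : PropForm) : Prob μ β = 1 ↔ ∀ᵐ v ∂μ, β.sat v :=
  (ENNReal.toReal_eq_one_iff _).trans (mem_ae_iff_prob_eq_one β.measurableSet_setOf_sat).symm

theorem sat_star_iff_ae_sat (β : PropForm) : (star β).sat μ ρ ↔ ∀ᵐ v ∂μ, β.sat v :=
  prob_eq_one_iff_ae_sat μ β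

theorem forall_mem_star_image_sat_iff_ae (Δ : Set PropForm) :
    (∀ γ ∈ star '' Δ, γ.sat μ ρ) ↔ ∀ᵐ v ∂μ, ∀ δ ∈ Δ, δ.sat v := by
  simp only [Set.forall_mem_image, sat_star_iff_ae_sat, ae_ball_iff Δ.to_countable]

end StochasticValuation

/-- conservativeness of PPL over classical propositional logic:
`Δ* ⊨ α*` in PPL iff `Δ ⊨ α` classically. -/
theorem ppl_conservative (Δ : Set PropForm) (α : PropForm) :
    PPLentails (star '' Δ) (star α) ↔ SetEntails Δ α := by
  constructor
  · intro h v hΔ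
    have hΔ_star : ∀ γ ∈ star '' Δ, γ.sat (Measure.dirac v) 0 := by
      rwa [forall_mem_star_image_sat_iff_ae, ae_dirac_eq, Filter.eventually_pure]
    have hα_star : (star α).sat (Measure.dirac v) 0 := h _ inferInstance 0 hΔ_star
    rwa [sat_star_iff_ae_sat, ae_dirac_eq, Filter.eventually_pure] at hα_star
  · intro h μ _ ρ hΔ_star
    have hΔ : ∀ᵐ v ∂μ, ∀ δ ∈ Δ, δ.sat v := (forall_mem_star_image_sat_iff_ae μ ρ Δ).mp hΔ_star
    exact (sat_star_iff_ae_sat μ ρ α).mpr (hΔ.mono h)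
end
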